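/- Let 0 < μ < 1/2 and let v : [0,1]² → ℂ be given by the Fourier cosine series v(x) = Σ_{m,n≥0} c_{mn} cos(πn x₁) cos(πm x₂) with Σ_{m,n} |c_{mn}|² (1 + m² + n²) < ∞. Then there is a constant C independent of μ and v such that ∫_{|x₁ − 1/2| < μ} |v(x₁, 0)|² dx₁ ≤ C μ |ln μ| · Σ_{m,n} |c_{mn}|² (1 + m² + n²). -/

import Mathlib

open MeasureTheory

/-!
On the edge `x₂ = 0` the function `v` reduces to `∑ aₙ cos (π n x₁)` with `aₙ = ∑ₘ cₘₙ`. Since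
`∑ₘ 1 / (1 + m² + n²) ≲ 1 / (1 + n)`, Cauchy–Schwarz bounds `∑ |aₙ|² (1 + n)` by the energy of `v`:
the trace lies in `H^{1/2}`. Split the cosine series at frequency `1 / μ`. By Cauchy–Schwarz with
weights `1 + n`, the square of the low part is at most a harmonic sum `≲ |log μ|` times
`∑ |aₙ|² (1 + n)` at every point, and integration over the window gains its length `2μ`. By
orthogonality of the cosines on `[0, 1]`, the high part has squared `L²` norm at most
`μ ∑ |aₙ|² (1 + n)`. Fatou's lemma passes from partial sums to the series.
-/

open Filter Topology
open scoped RealInnerProductSpace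

section WeightedCauchySchwarz

variable {ι F : Type*} [SeminormedAddCommGroup F]

lemma sum_norm_sq_le_sum_norm_sq_mul_mul_sum_inv (t : Finset ι) (d : ι → F) {w : ι → ℝ}
    (hw : ∀ i ∈ t, 0 < w i) :
    (∑ i ∈ t, ‖d i‖) ^ 2 ≤ (∑ i ∈ t, ‖d i‖ ^ 2 * w i) * ∑ i ∈ t, (w i)⁻¹ :=
  Finset.sum_sq_le_sum_mul_sum_of_sq_le_mul t
    (fun i hi => mul_nonneg (sq_nonneg _) (hw i hi).le) (fun i hi => (inv_pos.2 (hw i hi)).le)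
    (fun i hi => (mul_inv_cancel_right₀ (hw i hi).ne' _).ge)

lemma norm_tsum_sq_le_tsum_norm_sq_mul_mul_tsum_inv {d : ι → F} {w : ι → ℝ} (hw : ∀ i, 0 < w i)
    (hd : Summable fun i => ‖d i‖ ^ 2 * w i) (hw_inv : Summable fun i => (w i)⁻¹) :
    ‖∑' i, d i‖ ^ 2 ≤ (∑' i, ‖d i‖ ^ 2 * w i) * ∑' i, (w i)⁻¹ := by
  have hd_nonneg : ∀ i, 0 ≤ ‖d i‖ ^ 2 * w i := fun i => mul_nonneg (sq_nonneg _) (hw i).le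
  have hw_inv_nonneg : ∀ i, 0 ≤ (w i)⁻¹ := fun i => (inv_pos.2 (hw i)).le
  by_cases hsum : Summable d
  · refine le_of_tendsto (hsum.hasSum.norm.pow 2) (Eventually.of_forall fun t => ?_)
    calc ‖∑ i ∈ t, d i‖ ^ 2 ≤ (∑ i ∈ t, ‖d i‖) ^ 2 := by gcongr; exact norm_sum_le _ _
      _ ≤ (∑ i ∈ t, ‖d i‖ ^ 2 * w i) * ∑ i ∈ t, (w i)⁻¹ :=
        sum_norm_sq_le_sum_norm_sq_mul_mul_sum_inv t d fun i _ => hw i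
      _ ≤ (∑' i, ‖d i‖ ^ 2 * w i) * ∑' i, (w i)⁻¹ :=
        mul_le_mul (hd.sum_le_tsum t fun i _ => hd_nonneg i)
          (hw_inv.sum_le_tsum t fun i _ => hw_inv_nonneg i)
          (Finset.sum_nonneg fun i _ => hw_inv_nonneg i) (tsum_nonneg hd_nonneg)
  · rw [tsum_eq_zero_of_not_summable hsum, norm_zero, zero_pow two_ne_zero]
    exact mul_nonneg (tsum_nonneg hd_nonneg) (tsum_nonneg hw_inv_nonneg)

end WeightedCauchySchwarz

section TraceCoefficients

lemma inv_one_add_sq_add_sq_le_sub {x y : ℝ} (hx : 0 ≤ x) (hy : 0 ≤ y) :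
    (1 + y ^ 2 + x ^ 2)⁻¹ ≤ 6 / (1 + x + y) - 6 / (1 + x + (y + 1)) := by
  rw [div_sub_div _ _ (by positivity) (by positivity), inv_eq_one_div,
    div_le_div_iff₀ (by positivity) (by positivity)]
  nlinarith [sq_nonneg (y - x), sq_nonneg (y - 1), sq_nonneg (x - 1)]

lemma sum_range_inv_one_add_sq_add_sq_le {x : ℝ} (hx : 0 ≤ x) (N : ℕ) :
    ∑ m ∈ Finset.range N, (1 + (m : ℝ) ^ 2 + x ^ 2)⁻¹ ≤ 6 / (1 + x) := by
  calc ∑ m ∈ Finset.range N, (1 + (m : ℝ) ^ 2 + x ^ 2)⁻¹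
      ≤ ∑ m ∈ Finset.range N, (6 / (1 + x + m) - 6 / (1 + x + (m + 1 : ℕ))) := by
        gcongr with m
        exact_mod_cast inv_one_add_sq_add_sq_le_sub hx m.cast_nonneg
    _ = 6 / (1 + x) - 6 / (1 + x + N) := by
        rw [Finset.sum_range_sub' (fun m : ℕ => 6 / (1 + x + m)), Nat.cast_zero, add_zero]
    _ ≤ 6 / (1 + x) := sub_le_self _ (by positivity)

lemma norm_tsum_sq_mul_one_add_le {F : Type*} [SeminormedAddCommGroup F] {x : ℝ} (hx : 0 ≤ x)
    {d : ℕ → F} (hd : Summable fun m : ℕ => ‖d m‖ ^ 2 * (1 + (m : ℝ) ^ 2 + x ^ 2)) :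
    ‖∑' m, d m‖ ^ 2 * (1 + x) ≤ 6 * ∑' m : ℕ, ‖d m‖ ^ 2 * (1 + (m : ℝ) ^ 2 + x ^ 2) := by
  have hw_inv_nonneg (m : ℕ) : 0 ≤ (1 + (m : ℝ) ^ 2 + x ^ 2)⁻¹ := by positivity
  have hw_inv := summable_of_sum_range_le hw_inv_nonneg (sum_range_inv_one_add_sq_add_sq_le hx)
  calc ‖∑' m, d m‖ ^ 2 * (1 + x)
      ≤ (∑' m : ℕ, ‖d m‖ ^ 2 * (1 + (m : ℝ) ^ 2 + x ^ 2)) * (6 / (1 + x)) * (1 + x) := by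
        gcongr
        refine (norm_tsum_sq_le_tsum_norm_sq_mul_mul_tsum_inv (fun m => by positivity)
          hd hw_inv).trans ?_
        gcongr
        exact hw_inv.tsum_le_of_sum_range_le (sum_range_inv_one_add_sq_add_sq_le hx)
    _ = 6 * ∑' m : ℕ, ‖d m‖ ^ 2 * (1 + (m : ℝ) ^ 2 + x ^ 2) := by field_simp

lemma sum_norm_tsum_sq_mul_one_add_le {F : Type*} [SeminormedAddCommGroup F] {c : ℕ → ℕ → F}
    (hc : Summable fun p : ℕ × ℕ => ‖c p.1 p.2‖ ^ 2 * (1 + (p.1 : ℝ) ^ 2 + (p.2 : ℝ) ^ 2))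
    (t : Finset ℕ) :
    ∑ n ∈ t, ‖∑' m, c m n‖ ^ 2 * (1 + (n : ℝ)) ≤
      6 * ∑' p : ℕ × ℕ, ‖c p.1 p.2‖ ^ 2 * (1 + (p.1 : ℝ) ^ 2 + (p.2 : ℝ) ^ 2) := by
  have hswap := hc.prod_symm
  calc ∑ n ∈ t, ‖∑' m, c m n‖ ^ 2 * (1 + (n : ℝ))
      ≤ ∑ n ∈ t, 6 * ∑' m : ℕ, ‖c m n‖ ^ 2 * (1 + (m : ℝ) ^ 2 + (n : ℝ) ^ 2) :=
        Finset.sum_le_sum fun n _ =>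
          norm_tsum_sq_mul_one_add_le n.cast_nonneg (hswap.prod_factor n)
    _ ≤ 6 * ∑' n : ℕ, ∑' m : ℕ, ‖c m n‖ ^ 2 * (1 + (m : ℝ) ^ 2 + (n : ℝ) ^ 2) := by
        rw [← Finset.mul_sum]
        gcongr
        exact hswap.prod.sum_le_tsum t fun n _ => tsum_nonneg fun m => by positivity
    _ = 6 * ∑' p : ℕ × ℕ, ‖c p.1 p.2‖ ^ 2 * (1 + (p.1 : ℝ) ^ 2 + (p.2 : ℝ) ^ 2) := by
        rw [← (Equiv.prodComm ℕ ℕ).tsum_eq]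
        exact congrArg (6 * ·) hswap.tsum_prod.symm

end TraceCoefficients

section Orthogonality

variable {E : Type*} [NormedAddCommGroup E] [InnerProductSpace ℝ E]

lemma norm_sum_smul_sq {ι : Type*} (t : Finset ι) (r : ι → ℝ) (a : ι → E) :
    ‖∑ i ∈ t, r i • a i‖ ^ 2 = ∑ i ∈ t, ∑ j ∈ t, r i * r j * ⟪a i, a j⟫ := by
  simp_rw [← real_inner_self_eq_norm_sq, sum_inner, inner_sum, real_inner_smul_left,
    real_inner_smul_right, mul_assoc]

lemma integral_norm_sum_smul_sq_of_orthogonal {ι α : Type*} [MeasurableSpace α] {ν : Measure α}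
    (t : Finset ι) (a : ι → E) {φ : ι → α → ℝ} (hφ : ∀ i ∈ t, MemLp (φ i) 2 ν)
    (hortho : ∀ i ∈ t, ∀ j ∈ t, i ≠ j → ∫ x, φ i x * φ j x ∂ν = 0) :
    ∫ x, ‖∑ i ∈ t, φ i x • a i‖ ^ 2 ∂ν = ∑ i ∈ t, (∫ x, φ i x ^ 2 ∂ν) * ‖a i‖ ^ 2 := by
  have hint : ∀ i ∈ t, ∀ j ∈ t, Integrable (fun x => φ i x * φ j x * ⟪a i, a j⟫) ν :=
    fun i hi j hj => ((hφ i hi).integrable_mul (hφ j hj)).mul_const _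
  calc ∫ x, ‖∑ i ∈ t, φ i x • a i‖ ^ 2 ∂ν
      = ∑ i ∈ t, ∑ j ∈ t, (∫ x, φ i x * φ j x ∂ν) * ⟪a i, a j⟫ := by
        simp_rw [norm_sum_smul_sq]
        rw [integral_finsetSum _ fun i hi => integrable_finsetSum _ (hint i hi)]
        refine Finset.sum_congr rfl fun i hi => ?_
        rw [integral_finsetSum _ (hint i hi)]
        simp_rw [integral_mul_const]
    _ = ∑ i ∈ t, (∫ x, φ i x ^ 2 ∂ν) * ‖a i‖ ^ 2 := by
        refine Finset.sum_congr rfl fun i hi => ?_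
        rw [Finset.sum_eq_single_of_mem i hi fun j hj hji => by
          rw [hortho i hi j hj hji.symm, zero_mul], real_inner_self_eq_norm_sq]
        simp_rw [sq]

lemma integral_cos_pi_mul_int_mul {k : ℤ} (hk : k ≠ 0) :
    ∫ x in (0 : ℝ)..1, Real.cos (Real.pi * k * x) = 0 := by
  have hpik : Real.pi * k ≠ 0 := mul_ne_zero Real.pi_ne_zero (Int.cast_ne_zero.2 hk)
  rw [intervalIntegral.integral_comp_mul_left Real.cos hpik, integral_cos, mul_one, mul_zero,
    Real.sin_zero, mul_comm Real.pi, Real.sin_int_mul_pi, sub_zero, smul_zero]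

lemma integral_cos_pi_mul_nat_mul_cos_of_ne {n m : ℕ} (hnm : n ≠ m) :
    ∫ x in (0 : ℝ)..1, Real.cos (Real.pi * n * x) * Real.cos (Real.pi * m * x) = 0 := by
  have hproduct (x : ℝ) : Real.cos (Real.pi * n * x) * Real.cos (Real.pi * m * x) =
      (Real.cos (Real.pi * (n - m : ℤ) * x) + Real.cos (Real.pi * (n + m : ℤ) * x)) / 2 := by
    push_cast
    rw [mul_sub, sub_mul, mul_add, add_mul, Real.cos_sub, Real.cos_add]
    ring
  have hint (k : ℤ) :
      IntervalIntegrable (fun x : ℝ => Real.cos (Real.pi * k * x)) volume 0 1 :=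
    Continuous.intervalIntegrable (by fun_prop) _ _
  simp_rw [hproduct]
  rw [intervalIntegral.integral_div, intervalIntegral.integral_add (hint _) (hint _),
    integral_cos_pi_mul_int_mul (by lia), integral_cos_pi_mul_int_mul (by lia), add_zero, zero_div]

end Orthogonality

section Logarithm

variable {μ : ℝ}

lemma log_two_le_abs_log (hμ_pos : 0 < μ) (hμ_le : μ ≤ 1 / 2) : Real.log 2 ≤ |Real.log μ| := by
  rw [abs_of_neg (Real.log_neg hμ_pos (by linarith)), ← Real.log_inv]
  exact Real.log_le_log two_pos (by rw [le_inv_comm₀ two_pos hμ_pos]; linarith)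

lemma sum_range_ceil_inv_le_abs_log (hμ_pos : 0 < μ) (hμ_le : μ ≤ 1 / 2) :
    ∑ n ∈ Finset.range ⌈μ⁻¹⌉₊, (1 + (n : ℝ))⁻¹ ≤ 4 * |Real.log μ| := by
  have hinv : 1 ≤ μ⁻¹ := (one_le_inv₀ hμ_pos).2 (by linarith)
  have hceil : (⌈μ⁻¹⌉₊ : ℝ) ≤ 2 * μ⁻¹ := by linarith [Nat.ceil_lt_add_one (inv_pos.2 hμ_pos).le]
  have hlog : Real.log ⌈μ⁻¹⌉₊ ≤ Real.log 2 + |Real.log μ| := by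
    rw [abs_of_neg (Real.log_neg hμ_pos (by linarith)), ← Real.log_inv,
      ← Real.log_mul two_ne_zero (by positivity)]
    exact Real.log_le_log (by positivity) hceil
  calc ∑ n ∈ Finset.range ⌈μ⁻¹⌉₊, (1 + (n : ℝ))⁻¹ = (harmonic ⌈μ⁻¹⌉₊ : ℝ) := by
        simp [harmonic, add_comm]
    _ ≤ 1 + Real.log ⌈μ⁻¹⌉₊ := harmonic_le_one_add_log _
    _ ≤ 4 * |Real.log μ| := by linarith [log_two_le_abs_log hμ_pos hμ_le, Real.log_two_gt_d9]

end Logarithm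

section CosinePolynomials

variable {E : Type*} [NormedAddCommGroup E] [NormedSpace ℝ E]

/-- The cosine polynomial `∑ n ∈ t, cos (π n x) aₙ` with vector coefficients: the trace on the edge
`x₂ = 0` of a cosine series in two variables, truncated to a finite set `t` of frequencies. -/
noncomputable def cosinePolynomial (a : ℕ → E) (t : Finset ℕ) (x : ℝ) : E :=
  ∑ n ∈ t, Real.cos (Real.pi * n * x) • a n

lemma continuous_cosinePolynomial (a : ℕ → E) (t : Finset ℕ) :
    Continuous (cosinePolynomial a t) := by
  unfold cosinePolynomial
  fun_prop

lemma integrableOn_norm_cosinePolynomial_sq {s : Set ℝ} (hs : s ⊆ Set.Icc 0 1)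
    (a : ℕ → E) (t : Finset ℕ) : IntegrableOn (fun x => ‖cosinePolynomial a t x‖ ^ 2) s :=
  ((continuous_cosinePolynomial a t).norm.pow 2).integrableOn_Icc.mono_set hs

lemma norm_cosinePolynomial_sq_le (a : ℕ → E) (t : Finset ℕ) (x : ℝ) :
    ‖cosinePolynomial a t x‖ ^ 2 ≤
      (∑ n ∈ t, ‖a n‖ ^ 2 * (1 + (n : ℝ))) * ∑ n ∈ t, (1 + (n : ℝ))⁻¹ := by
  have hnorm : ‖cosinePolynomial a t x‖ ≤ ∑ n ∈ t, ‖a n‖ := by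
    refine norm_sum_le_of_le _ fun n _ => ?_
    rw [norm_smul]
    exact mul_le_of_le_one_left (norm_nonneg _) (Real.abs_cos_le_one _)
  exact (pow_le_pow_left₀ (norm_nonneg _) hnorm 2).trans
    (sum_norm_sq_le_sum_norm_sq_mul_mul_sum_inv t a fun n _ => by positivity)

lemma norm_cosinePolynomial_sq_le_filter_add_filter_not (a : ℕ → E) (t : Finset ℕ)
    (p : ℕ → Prop) [DecidablePred p] (x : ℝ) :
    ‖cosinePolynomial a t x‖ ^ 2 ≤ 2 * (‖cosinePolynomial a (t.filter p) x‖ ^ 2 +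
      ‖cosinePolynomial a (t.filter (¬ p ·)) x‖ ^ 2) := by
  have hsplit : cosinePolynomial a t x =
      cosinePolynomial a (t.filter p) x + cosinePolynomial a (t.filter (¬ p ·)) x :=
    (Finset.sum_filter_add_sum_filter_not t p _).symm
  rw [hsplit]
  exact (pow_le_pow_left₀ (norm_nonneg _) (norm_add_le _ _) 2).trans add_sq_le

lemma setIntegral_norm_cosinePolynomial_sq_le_of_forall_filter_le {s : Set ℝ}
    (hs : s ⊆ Set.Icc 0 1) (a : ℕ → E) (t : Finset ℕ) {p : ℕ → Prop} [DecidablePred p] {B : ℝ}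
    (hB : ∀ x, ‖cosinePolynomial a (t.filter p) x‖ ^ 2 ≤ B) :
    ∫ x in s, ‖cosinePolynomial a t x‖ ^ 2 ≤
      2 * (volume.real s * B + ∫ x in s, ‖cosinePolynomial a (t.filter (¬ p ·)) x‖ ^ 2) := by
  have hint_const : IntegrableOn (fun _ : ℝ => B) s :=
    integrableOn_const (measure_ne_top_of_subset hs measure_Icc_lt_top.ne)
  have hint_filter := integrableOn_norm_cosinePolynomial_sq hs a (t.filter (¬ p ·))
  have hint_sum : IntegrableOn
      (fun x => B + ‖cosinePolynomial a (t.filter (¬ p ·)) x‖ ^ 2) s := hint_const.add hint_filter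
  calc ∫ x in s, ‖cosinePolynomial a t x‖ ^ 2
      ≤ ∫ x in s, 2 * (B + ‖cosinePolynomial a (t.filter (¬ p ·)) x‖ ^ 2) :=
        setIntegral_mono (integrableOn_norm_cosinePolynomial_sq hs a t)
          (hint_sum.const_mul 2) fun x =>
          (norm_cosinePolynomial_sq_le_filter_add_filter_not a t p x).trans
            (by gcongr; exact hB x)
    _ = 2 * (volume.real s * B + ∫ x in s, ‖cosinePolynomial a (t.filter (¬ p ·)) x‖ ^ 2) := by
        rw [integral_const_mul, integral_add hint_const hint_filter, setIntegral_const,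
          smul_eq_mul]

lemma norm_cosinePolynomial_sq_le_of_lt_inv {μ : ℝ} (hμ_pos : 0 < μ) (hμ_le : μ ≤ 1 / 2)
    (a : ℕ → E) {t : Finset ℕ} (ht : ∀ n ∈ t, (n : ℝ) < μ⁻¹) (x : ℝ) :
    ‖cosinePolynomial a t x‖ ^ 2 ≤
      4 * |Real.log μ| * ∑ n ∈ t, ‖a n‖ ^ 2 * (1 + (n : ℝ)) := by
  have hsubset : t ⊆ Finset.range ⌈μ⁻¹⌉₊ := fun n hn =>
    Finset.mem_range.2 (Nat.lt_ceil.2 (ht n hn))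
  rw [mul_comm]
  refine (norm_cosinePolynomial_sq_le a t x).trans ?_
  gcongr
  exact (Finset.sum_le_sum_of_subset_of_nonneg hsubset fun n _ _ => by positivity).trans
    (sum_range_ceil_inv_le_abs_log hμ_pos hμ_le)

lemma tendsto_cosinePolynomial_range [CompleteSpace E] {c : ℕ → ℕ → E} {x : ℝ}
    (hsum : Summable fun p : ℕ × ℕ => Real.cos (Real.pi * p.2 * x) • c p.1 p.2) :
    Tendsto (fun N => cosinePolynomial (fun n => ∑' m, c m n) (Finset.range N) x) atTop
      (𝓝 (∑' p : ℕ × ℕ, Real.cos (Real.pi * p.2 * x) • c p.1 p.2)) := by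
  have hswap := hsum.prod_symm
  rw [← (Equiv.prodComm ℕ ℕ).tsum_eq]
  convert hswap.prod.hasSum.tendsto_sum_nat using 2 with N
  · exact Finset.sum_congr rfl fun n _ => (tsum_const_smul'' _).symm
  · exact hswap.tsum_prod

end CosinePolynomials

section WindowEstimate

variable {E : Type*} [NormedAddCommGroup E] [InnerProductSpace ℝ E] {s : Set ℝ} {μ : ℝ}

lemma setIntegral_Icc_norm_cosinePolynomial_sq_le (a : ℕ → E) (t : Finset ℕ) :
    ∫ x in Set.Icc 0 1, ‖cosinePolynomial a t x‖ ^ 2 ≤ ∑ n ∈ t, ‖a n‖ ^ 2 := by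
  have hmemLp (n : ℕ) :
      MemLp (fun x : ℝ => Real.cos (Real.pi * n * x)) 2 (volume.restrict (Set.Icc 0 1)) :=
    MemLp.of_bound (by fun_prop) 1 (Eventually.of_forall fun x => Real.abs_cos_le_one _)
  have hortho {n m : ℕ} (hnm : n ≠ m) :
      ∫ x in Set.Icc (0 : ℝ) 1, Real.cos (Real.pi * n * x) * Real.cos (Real.pi * m * x) = 0 := by
    rw [integral_Icc_eq_integral_Ioc, ← intervalIntegral.integral_of_le zero_le_one,
      integral_cos_pi_mul_nat_mul_cos_of_ne hnm]
  have hsq_le_one (n : ℕ) : ∫ x in Set.Icc (0 : ℝ) 1, Real.cos (Real.pi * n * x) ^ 2 ≤ 1 := by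
    calc ∫ x in Set.Icc (0 : ℝ) 1, Real.cos (Real.pi * n * x) ^ 2
        ≤ ∫ _ in Set.Icc (0 : ℝ) 1, (1 : ℝ) :=
          integral_mono (hmemLp n).integrable_sq (integrable_const 1) fun x => Real.cos_sq_le_one _
      _ = 1 := by simp
  calc ∫ x in Set.Icc 0 1, ‖cosinePolynomial a t x‖ ^ 2
      = ∑ n ∈ t, (∫ x in Set.Icc (0 : ℝ) 1, Real.cos (Real.pi * n * x) ^ 2) * ‖a n‖ ^ 2 :=
        integral_norm_sum_smul_sq_of_orthogonal t a (fun n _ => hmemLp n)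
          fun n _ m _ => hortho
    _ ≤ ∑ n ∈ t, ‖a n‖ ^ 2 := Finset.sum_le_sum fun n _ =>
        mul_le_of_le_one_left (sq_nonneg _) (hsq_le_one n)

lemma setIntegral_norm_cosinePolynomial_sq_le_of_inv_le (hs : s ⊆ Set.Icc 0 1) (hμ_pos : 0 < μ)
    (a : ℕ → E) {t : Finset ℕ} (ht : ∀ n ∈ t, μ⁻¹ ≤ n) :
    ∫ x in s, ‖cosinePolynomial a t x‖ ^ 2 ≤ μ * ∑ n ∈ t, ‖a n‖ ^ 2 * (1 + (n : ℝ)) := by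
  calc ∫ x in s, ‖cosinePolynomial a t x‖ ^ 2
      ≤ ∫ x in Set.Icc 0 1, ‖cosinePolynomial a t x‖ ^ 2 :=
        setIntegral_mono_set (integrableOn_norm_cosinePolynomial_sq subset_rfl a t)
          (Eventually.of_forall fun x => sq_nonneg _) hs.eventuallyLE
    _ ≤ ∑ n ∈ t, ‖a n‖ ^ 2 := setIntegral_Icc_norm_cosinePolynomial_sq_le a t
    _ ≤ ∑ n ∈ t, μ * (‖a n‖ ^ 2 * (1 + (n : ℝ))) := by
        refine Finset.sum_le_sum fun n hn => ?_
        have hfrequency : 1 ≤ μ * (1 + n) := by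
          rw [← inv_le_iff_one_le_mul₀' hμ_pos]
          linarith [ht n hn]
        rw [mul_left_comm]
        exact le_mul_of_one_le_right (sq_nonneg _) hfrequency
    _ = μ * ∑ n ∈ t, ‖a n‖ ^ 2 * (1 + (n : ℝ)) := (Finset.mul_sum _ _ _).symm

lemma setIntegral_norm_cosinePolynomial_sq_le (hs : s ⊆ Set.Icc 0 1) (hsμ : volume.real s ≤ 2 * μ)
    (hμ_pos : 0 < μ) (hμ_le : μ ≤ 1 / 2) (a : ℕ → E) (t : Finset ℕ) :
    ∫ x in s, ‖cosinePolynomial a t x‖ ^ 2 ≤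
      20 * μ * |Real.log μ| * ∑ n ∈ t, ‖a n‖ ^ 2 * (1 + (n : ℝ)) := by
  set energy := ∑ n ∈ t, ‖a n‖ ^ 2 * (1 + (n : ℝ))
  set low := t.filter (fun n : ℕ => (n : ℝ) < μ⁻¹)
  set high := t.filter (fun n : ℕ => ¬ (n : ℝ) < μ⁻¹)
  have hsubenergy {u : Finset ℕ} (hu : u ⊆ t) : ∑ n ∈ u, ‖a n‖ ^ 2 * (1 + (n : ℝ)) ≤ energy :=
    Finset.sum_le_sum_of_subset_of_nonneg hu fun n _ _ => by positivity
  have hlow (x : ℝ) : ‖cosinePolynomial a low x‖ ^ 2 ≤ 4 * |Real.log μ| * energy :=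
    (norm_cosinePolynomial_sq_le_of_lt_inv hμ_pos hμ_le a
      (fun n hn => (Finset.mem_filter.1 hn).2) x).trans
      (by gcongr; exact hsubenergy (Finset.filter_subset _ _))
  have hhigh : ∫ x in s, ‖cosinePolynomial a high x‖ ^ 2 ≤ μ * energy :=
    (setIntegral_norm_cosinePolynomial_sq_le_of_inv_le hs hμ_pos a
      fun n hn => not_lt.1 (Finset.mem_filter.1 hn).2).trans
      (by gcongr; exact hsubenergy (Finset.filter_subset _ _))
  have henergy_nonneg : 0 ≤ energy := Finset.sum_nonneg fun n _ => by positivity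
  have hlog : 1 ≤ 2 * |Real.log μ| := by
    linarith [log_two_le_abs_log hμ_pos hμ_le, Real.log_two_gt_d9]
  calc ∫ x in s, ‖cosinePolynomial a t x‖ ^ 2
      ≤ 2 * (volume.real s * (4 * |Real.log μ| * energy) +
          ∫ x in s, ‖cosinePolynomial a high x‖ ^ 2) :=
        setIntegral_norm_cosinePolynomial_sq_le_of_forall_filter_le hs a t hlow
    _ ≤ 2 * (2 * μ * (4 * |Real.log μ| * energy) + μ * energy * (2 * |Real.log μ|)) := by
        gcongr
        exact hhigh.trans (le_mul_of_one_le_right (mul_nonneg hμ_pos.le henergy_nonneg) hlog)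
    _ = 20 * μ * |Real.log μ| * energy := by ring

end WindowEstimate

/-- Stated for limits wherever `f x ≠ 0` because an unconditional sum that fails to exist is `0`
by convention; such points only decrease the integral. -/
lemma integral_le_of_tendsto_of_integral_le {α : Type*} [MeasurableSpace α] {ν : Measure α}
    {f : α → ℝ} {g : ℕ → α → ℝ} {B : ℝ} (hg_int : ∀ N, Integrable (g N) ν)
    (hg_nonneg : ∀ N x, 0 ≤ g N x)
    (hlim : ∀ x, f x ≠ 0 → Tendsto (fun N => g N x) atTop (𝓝 (f x)))
    (hB : ∀ N, ∫ x, g N x ∂ν ≤ B) : ∫ x, f x ∂ν ≤ B := by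
  have hB_nonneg : 0 ≤ B := (integral_nonneg (hg_nonneg 0)).trans (hB 0)
  have henorm_le (x : α) : ‖f x‖ₑ ≤ liminf (fun N => ‖g N x‖ₑ) atTop := by
    by_cases hfx : f x = 0
    · simp only [hfx, enorm_zero, zero_le]
    · exact (hlim x hfx).enorm.liminf_eq.ge
  have hlintegral (N : ℕ) : ∫⁻ x, ‖g N x‖ₑ ∂ν ≤ ENNReal.ofReal B := by
    rw [← ofReal_integral_norm_eq_lintegral_enorm (hg_int N)]
    simp_rw [Real.norm_of_nonneg (hg_nonneg N _)]
    exact ENNReal.ofReal_le_ofReal (hB N)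
  have hfatou : ‖∫ x, f x ∂ν‖ₑ ≤ ENNReal.ofReal B := calc
    ‖∫ x, f x ∂ν‖ₑ ≤ ∫⁻ x, ‖f x‖ₑ ∂ν := enorm_integral_le_lintegral_enorm f
    _ ≤ ∫⁻ x, liminf (fun N => ‖g N x‖ₑ) atTop ∂ν := lintegral_mono henorm_le
    _ ≤ liminf (fun N => ∫⁻ x, ‖g N x‖ₑ ∂ν) atTop :=
        lintegral_liminf_le' fun N => (hg_int N).aestronglyMeasurable.enorm
    _ ≤ ENNReal.ofReal B := liminf_le_of_le (by isBoundedDefault)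
        fun b hb => hb.exists.elim fun N hN => hN.trans (hlintegral N)
  rw [← ofReal_norm, ENNReal.ofReal_le_ofReal_iff hB_nonneg] at hfatou
  exact (Real.le_norm_self _).trans hfatou

theorem fourier_trace_estimate_general {E : Type*} [NormedAddCommGroup E] [InnerProductSpace ℝ E]
    [CompleteSpace E] {s : Set ℝ} (hs : s ⊆ Set.Icc 0 1) {μ : ℝ} (hsμ : volume.real s ≤ 2 * μ)
    (hμ_pos : 0 < μ) (hμ_le : μ ≤ 1 / 2) {c : ℕ → ℕ → E}
    (hc : Summable fun p : ℕ × ℕ => ‖c p.1 p.2‖ ^ 2 * (1 + (p.1 : ℝ) ^ 2 + (p.2 : ℝ) ^ 2)) :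
    ∫ x in s, ‖∑' p : ℕ × ℕ, Real.cos (Real.pi * p.2 * x) • c p.1 p.2‖ ^ 2 ≤
      120 * μ * |Real.log μ| *
        ∑' p : ℕ × ℕ, ‖c p.1 p.2‖ ^ 2 * (1 + (p.1 : ℝ) ^ 2 + (p.2 : ℝ) ^ 2) := by
  refine integral_le_of_tendsto_of_integral_le
    (fun N => integrableOn_norm_cosinePolynomial_sq hs (fun n => ∑' m, c m n) (Finset.range N))
    (fun N x => sq_nonneg _) (fun x hx => ?_) fun N => ?_
  · have hsum : Summable fun p : ℕ × ℕ => Real.cos (Real.pi * p.2 * x) • c p.1 p.2 :=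
      by_contra fun h => hx (by rw [tsum_eq_zero_of_not_summable h, norm_zero, sq, mul_zero])
    exact (tendsto_cosinePolynomial_range hsum).norm.pow 2
  · refine (setIntegral_norm_cosinePolynomial_sq_le hs hsμ hμ_pos hμ_le _ _).trans ?_
    refine (mul_le_mul_of_nonneg_left (sum_norm_tsum_sq_mul_one_add_le hc _)
      (by positivity)).trans_eq ?_
    ring

/-- Fourier-series form of the trace estimate (Lemma 5.2): for `0 < μ < 1/2` and
`v(x) = Σ c_{mn} cos(πn x₁) cos(πm x₂)` with `Σ |c_{mn}|²(1+m²+n²) < ∞`, the trace of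
`v` on the boundary window `|x₁ − 1/2| < μ`, `x₂ = 0` satisfies
`∫ |v(x₁,0)|² dx₁ ≤ C μ |ln μ| Σ |c_{mn}|²(1+m²+n²)`. -/
theorem fourier_trace_estimate :
    ∃ C > (0 : ℝ), ∀ μ : ℝ, 0 < μ → μ < 1 / 2 → ∀ c : ℕ → ℕ → ℂ,
      Summable (fun p : ℕ × ℕ =>
        ‖c p.1 p.2‖ ^ 2 * (1 + (p.1 : ℝ) ^ 2 + (p.2 : ℝ) ^ 2)) →
      (∫ x in Set.Ioo (1 / 2 - μ) (1 / 2 + μ),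
          ‖∑' p : ℕ × ℕ, c p.1 p.2 * (Real.cos (Real.pi * p.2 * x) : ℂ)‖ ^ 2) ≤
        C * μ * |Real.log μ| *
          ∑' p : ℕ × ℕ, ‖c p.1 p.2‖ ^ 2 * (1 + (p.1 : ℝ) ^ 2 + (p.2 : ℝ) ^ 2) := by
  refine ⟨120, by norm_num, fun μ hμ_pos hμ_lt c hc => ?_⟩
  have hwindow : Set.Ioo (1 / 2 - μ) (1 / 2 + μ) ⊆ Set.Icc 0 1 := fun x hx =>
    ⟨by linarith [hx.1], by linarith [hx.2]⟩
  have hlength : volume.real (Set.Ioo (1 / 2 - μ) (1 / 2 + μ)) ≤ 2 * μ := by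
    rw [Real.volume_real_Ioo_of_le (by linarith)]
    linarith
  simpa only [Complex.real_smul, mul_comm] using
    fourier_trace_estimate_general hwindow hlength hμ_pos hμ_lt.le hc
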